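/- For all p, q ∈ {1,…,N}: (i) ∫_{∂B₁} Σ_{i,j=1}^N H_{ij}(y) (∂_q H_{ij})(y) y_p dσ(y) = (|S^{N−1}|/(N(N+2))) Σ_{i,j,k=1}^N (W_{ikjp}+W_{ipjk})(W_{ikjq}+W_{iqjk}); and (ii) ∫_{∂B₁} Σ_{i,j,k,ℓ=1}^N ((∂_k∂_ℓ H_{ij})(y))² y_p y_q dσ(y) = (|S^{N−1}|/N) (Σ_{i,j,k,ℓ=1}^N (W_{ikjℓ}+W_{iℓjk})²) δ_{pq}. -/

import Mathlib

open scoped BigOperators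
open MeasureTheory

noncomputable section

/-- The partial derivative `∂f/∂y_i` of a function on Euclidean space. -/
def pd (N : ℕ) (i : Fin N) (f : EuclideanSpace ℝ (Fin N) → ℝ) :
    EuclideanSpace ℝ (Fin N) → ℝ :=
  fun y => fderiv ℝ f y (EuclideanSpace.single i 1)

/-- `H_{ij}(y) = Σ_{p,q} W_{ipjq} y_p y_q`. -/
def Hmat (N : ℕ) (W : Fin N → Fin N → Fin N → Fin N → ℝ) (i j : Fin N)
    (y : EuclideanSpace ℝ (Fin N)) : ℝ :=
  ∑ p : Fin N, ∑ q : Fin N, W i p j q * y p * y q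

/-- The surface measure on the unit sphere `S^{N-1} ⊂ ℝ^N`. -/
def sphereMeasure (N : ℕ) :
    Measure (Metric.sphere (0 : EuclideanSpace ℝ (Fin N)) 1) :=
  (volume : Measure (EuclideanSpace ℝ (Fin N))).toSphere

/-- `|S^{N-1}|`, the total surface measure of the unit sphere in `ℝ^N`. -/
def sphereArea (N : ℕ) : ℝ := (sphereMeasure N Set.univ).toReal

open Metric Module Set
open scoped Pointwise RealInnerProductSpace

/-!
For a rotation invariant measure of total mass `m` on the unit sphere of an `n`-dimensional space,
`∫ ⟪v, y⟫ ^ k = C k * ‖v‖ ^ k`, since reflections act transitively on vectors of a given norm.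
Summing over an orthonormal basis and using `‖y‖ = 1` determines `C 2 = m / n` and, through
`∫ ⟪u, y⟫ ^ 2 * ⟪v, y⟫ ^ 2 = C 4 / 3 * (‖u‖ ^ 2 * ‖v‖ ^ 2 + 2 * ⟪u, v⟫ ^ 2)`, also
`C 4 = 3 * m / (n * (n + 2))`. Polarization then gives all moments of order two and four. Both
integrals in question are contractions of these moments with `W`; in the first one the trace term
drops out because every `H i j` is harmonic, that is, `∑ k, W i k j k = 0`.
-/

section SphereHomeomorph

variable {E F : Type*} [NormedAddCommGroup E] [NormedSpace ℝ E] [NormedAddCommGroup F]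
  [NormedSpace ℝ F]

/-- The homeomorphism between unit spheres induced by a linear isometry equivalence. -/
def sphereHomeomorph (g : E ≃ₗᵢ[ℝ] F) : sphere (0 : E) 1 ≃ₜ sphere (0 : F) 1 :=
  g.toHomeomorph.subtype fun x => by simp

@[simp]
lemma coe_sphereHomeomorph (g : E ≃ₗᵢ[ℝ] F) (y : sphere (0 : E) 1) :
    (sphereHomeomorph g y : F) = g y :=
  rfl

lemma preimage_smul_coe_image_sphere (g : E ≃ₗᵢ[ℝ] F) (I : Set ℝ) (s : Set (sphere (0 : F) 1)) :
    g ⁻¹' (I • ((↑) '' s)) = I • ((↑) '' (sphereHomeomorph g ⁻¹' s)) := by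
  ext x
  simp only [mem_preimage, mem_smul, exists_mem_image]
  constructor
  · rintro ⟨r, hr, y, hy, hx⟩
    refine ⟨r, hr, (sphereHomeomorph g).symm y, by simpa using hy, g.injective ?_⟩
    rw [map_smul, ← hx, ← coe_sphereHomeomorph, Homeomorph.apply_symm_apply]
  · rintro ⟨r, hr, y, hy, rfl⟩
    exact ⟨r, hr, sphereHomeomorph g y, hy, by simp⟩

variable [MeasurableSpace E] [BorelSpace E] [MeasurableSpace F] [BorelSpace F]

lemma measurePreserving_sphereHomeomorph {μ : Measure E} {ν : Measure F} (g : E ≃ₗᵢ[ℝ] F)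
    (hg : MeasurePreserving g μ ν) :
    MeasurePreserving (sphereHomeomorph g) μ.toSphere ν.toSphere := by
  have hmeas : Measurable (sphereHomeomorph g) := (sphereHomeomorph g).continuous.measurable
  refine ⟨hmeas, ?_⟩
  ext s hs
  rw [Measure.map_apply hmeas hs, Measure.toSphere_apply' _ hs,
    Measure.toSphere_apply' _ (hmeas hs), ← preimage_smul_coe_image_sphere,
    hg.measure_preimage_emb g.toHomeomorph.measurableEmbedding, g.toLinearEquiv.finrank_eq]

end SphereHomeomorph

/-- Invariance of a measure on the unit sphere under the full orthogonal group, reflections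
included. -/
def IsRotationInvariant {E : Type*} [NormedAddCommGroup E] [NormedSpace ℝ E] [MeasurableSpace E]
    (μ : Measure (sphere (0 : E) 1)) : Prop :=
  ∀ g : E ≃ₗᵢ[ℝ] E, MeasurePreserving (sphereHomeomorph g) μ μ

section RotationInvariance

variable {E : Type*} [NormedAddCommGroup E] [InnerProductSpace ℝ E] [MeasurableSpace E]
  [BorelSpace E] {μ : Measure (sphere (0 : E) 1)}

lemma isRotationInvariant_toSphere_volume [FiniteDimensional ℝ E] :
    IsRotationInvariant (volume : Measure E).toSphere :=
  fun g => measurePreserving_sphereHomeomorph g g.measurePreserving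

lemma integral_comp_inner_eq_of_norm_eq {F : Type*} [NormedAddCommGroup F] [NormedSpace ℝ F]
    (hμ : IsRotationInvariant μ) {u v : E} (huv : ‖u‖ = ‖v‖) (φ : ℝ → F) :
    ∫ y, φ ⟪u, y⟫ ∂μ = ∫ y, φ ⟪v, y⟫ ∂μ := by
  set g : E ≃ₗᵢ[ℝ] E := (ℝ ∙ (u - v))ᗮ.reflection
  have hg : g u = v := Submodule.reflection_sub huv
  calc ∫ y, φ ⟪u, y⟫ ∂μ
      = ∫ y, φ ⟪v, sphereHomeomorph g y⟫ ∂μ := by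
        simp only [coe_sphereHomeomorph, ← hg, g.inner_map_map]
    _ = ∫ y, φ ⟪v, y⟫ ∂μ :=
        (hμ g).integral_comp (sphereHomeomorph g).measurableEmbedding fun y => φ ⟪v, y⟫

lemma integral_inner_pow_eq_norm_pow_mul (hμ : IsRotationInvariant μ) {e : E} (he : ‖e‖ = 1)
    (v : E) (n : ℕ) : ∫ y, ⟪v, y⟫ ^ n ∂μ = ‖v‖ ^ n * ∫ y, ⟪e, y⟫ ^ n ∂μ := by
  have hv : ‖v‖ = ‖‖v‖ • e‖ := by simp [norm_smul, he]
  rw [integral_comp_inner_eq_of_norm_eq hμ hv (· ^ n)]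
  simp_rw [real_inner_smul_left, mul_pow, integral_const_mul]

end RotationInvariance

section Moments

lemma integrable_of_continuous {X F : Type*} [TopologicalSpace X] [CompactSpace X]
    [MeasurableSpace X] [OpensMeasurableSpace X] [NormedAddCommGroup F] {μ : Measure X}
    [IsFiniteMeasureOnCompacts μ] {f : X → F} (hf : Continuous f) : Integrable f μ :=
  hf.integrable_of_hasCompactSupport (.of_compactSpace f)

variable {E : Type*} [NormedAddCommGroup E] [InnerProductSpace ℝ E] [FiniteDimensional ℝ E]
  [MeasurableSpace E] [BorelSpace E] {μ : Measure (sphere (0 : E) 1)} [IsFiniteMeasure μ]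

lemma sum_integral_mul_inner_sq_eq {ι : Type*} [Fintype ι] (b : OrthonormalBasis ι ℝ E)
    {f : sphere (0 : E) 1 → ℝ} (hf : Continuous f) :
    ∑ i, ∫ y, f y * ⟪b i, y⟫ ^ 2 ∂μ = ∫ y, f y ∂μ := by
  rw [← integral_finsetSum _ fun i _ => integrable_of_continuous (by fun_prop)]
  simp [← Finset.mul_sum, b.sum_sq_inner_right]

lemma integral_inner_sq [Nontrivial E] (hμ : IsRotationInvariant μ) (v : E) :
    ∫ y, ⟪v, y⟫ ^ 2 ∂μ = μ.real univ / finrank ℝ E * ‖v‖ ^ 2 := by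
  have hn : (finrank ℝ E : ℝ) ≠ 0 := mod_cast finrank_pos.ne'
  set b := stdOrthonormalBasis ℝ E
  have hsum : ∑ i, ∫ y, ⟪b i, y⟫ ^ 2 ∂μ = μ.real univ := by
    simpa using sum_integral_mul_inner_sq_eq (μ := μ) b (continuous_const (y := 1))
  have htotal : finrank ℝ E * ∫ y, ⟪v, y⟫ ^ 2 ∂μ = ‖v‖ ^ 2 * μ.real univ := by
    rw [← hsum, Finset.mul_sum]
    simp_rw [← integral_inner_pow_eq_norm_pow_mul hμ (b.norm_eq_one _) v 2]
    simp
  field_simp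
  linarith

lemma integral_inner_mul_inner [Nontrivial E] (hμ : IsRotationInvariant μ) (u v : E) :
    ∫ y, ⟪u, y⟫ * ⟪v, y⟫ ∂μ = μ.real univ / finrank ℝ E * ⟪u, v⟫ := by
  calc ∫ y, ⟪u, y⟫ * ⟪v, y⟫ ∂μ
      = ∫ y, 1 / 4 * (⟪u + v, y⟫ ^ 2 - ⟪u - v, y⟫ ^ 2) ∂μ := by
        congr with y
        rw [inner_add_left, inner_sub_left]
        ring
    _ = 1 / 4 * (∫ y, ⟪u + v, y⟫ ^ 2 ∂μ - ∫ y, ⟪u - v, y⟫ ^ 2 ∂μ) := by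
        rw [integral_const_mul, integral_sub] <;> exact integrable_of_continuous (by fun_prop)
    _ = μ.real univ / finrank ℝ E * ⟪u, v⟫ := by
        rw [integral_inner_sq hμ, integral_inner_sq hμ, norm_add_sq_real, norm_sub_sq_real]
        ring

lemma integral_inner_sq_mul_inner_sq_eq_mul_integral_inner_pow_four
    (hμ : IsRotationInvariant μ) {e : E} (he : ‖e‖ = 1) (u v : E) :
    ∫ y, ⟪u, y⟫ ^ 2 * ⟪v, y⟫ ^ 2 ∂μ
      = (‖u‖ ^ 2 * ‖v‖ ^ 2 + 2 * ⟪u, v⟫ ^ 2) / 3 * ∫ y, ⟪e, y⟫ ^ 4 ∂μ := by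
  have hfour (w : E) : ∫ y, ⟪w, y⟫ ^ 4 ∂μ = (‖w‖ ^ 2) ^ 2 * ∫ y, ⟪e, y⟫ ^ 4 ∂μ := by
    rw [integral_inner_pow_eq_norm_pow_mul hμ he, ← pow_mul]
  calc ∫ y, ⟪u, y⟫ ^ 2 * ⟪v, y⟫ ^ 2 ∂μ
      = ∫ y, 1 / 12 * (⟪u + v, y⟫ ^ 4 + ⟪u - v, y⟫ ^ 4
          - 2 * (⟪u, y⟫ ^ 4 + ⟪v, y⟫ ^ 4)) ∂μ := by
        congr with y
        rw [inner_add_left, inner_sub_left]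
        ring
    _ = 1 / 12 * (∫ y, ⟪u + v, y⟫ ^ 4 ∂μ + ∫ y, ⟪u - v, y⟫ ^ 4 ∂μ
          - 2 * (∫ y, ⟪u, y⟫ ^ 4 ∂μ + ∫ y, ⟪v, y⟫ ^ 4 ∂μ)) := by
        rw [integral_const_mul, integral_sub, integral_const_mul, integral_add, integral_add] <;>
          exact integrable_of_continuous (by fun_prop)
    _ = (‖u‖ ^ 2 * ‖v‖ ^ 2 + 2 * ⟪u, v⟫ ^ 2) / 3 * ∫ y, ⟪e, y⟫ ^ 4 ∂μ := by
        rw [hfour (u + v), hfour (u - v), hfour u, hfour v, norm_add_sq_real, norm_sub_sq_real]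
        ring

lemma integral_inner_pow_four_of_norm_eq_one (hμ : IsRotationInvariant μ) {e : E}
    (he : ‖e‖ = 1) :
    ∫ y, ⟪e, y⟫ ^ 4 ∂μ = 3 * μ.real univ / (finrank ℝ E * (finrank ℝ E + 2)) := by
  have : Nontrivial E := ⟨e, 0, by rintro rfl; simp at he⟩
  have hn : (finrank ℝ E : ℝ) ≠ 0 := mod_cast finrank_pos.ne'
  set b := stdOrthonormalBasis ℝ E
  set K := ∫ y, ⟪e, y⟫ ^ 4 ∂μ
  have hsum : μ.real univ / finrank ℝ E = (finrank ℝ E + 2) / 3 * K :=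
    calc μ.real univ / finrank ℝ E
        = ∫ y, ⟪e, y⟫ ^ 2 ∂μ := by simp [integral_inner_sq hμ, he]
      _ = ∑ i, ∫ y, ⟪e, y⟫ ^ 2 * ⟪b i, y⟫ ^ 2 ∂μ :=
          (sum_integral_mul_inner_sq_eq b (by fun_prop)).symm
      _ = ∑ i, (1 + 2 * ⟪e, b i⟫ ^ 2) / 3 * K := by
          simp [integral_inner_sq_mul_inner_sq_eq_mul_integral_inner_pow_four hμ he, he, K]
      _ = (finrank ℝ E + 2) / 3 * K := by
          simp [← Finset.sum_mul, ← Finset.sum_div, Finset.sum_add_distrib, ← Finset.mul_sum,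
            b.sum_sq_inner_left, he]
  field_simp at hsum ⊢
  linarith

lemma integral_inner_sq_mul_inner_sq [Nontrivial E] (hμ : IsRotationInvariant μ) (u v : E) :
    ∫ y, ⟪u, y⟫ ^ 2 * ⟪v, y⟫ ^ 2 ∂μ
      = μ.real univ / (finrank ℝ E * (finrank ℝ E + 2))
        * (‖u‖ ^ 2 * ‖v‖ ^ 2 + 2 * ⟪u, v⟫ ^ 2) := by
  obtain ⟨e, he⟩ := exists_norm_eq E zero_le_one
  rw [integral_inner_sq_mul_inner_sq_eq_mul_integral_inner_pow_four hμ he,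
    integral_inner_pow_four_of_norm_eq_one hμ he]
  ring

lemma integral_inner_sq_mul_inner_mul_inner [Nontrivial E] (hμ : IsRotationInvariant μ)
    (u v w : E) :
    ∫ y, ⟪u, y⟫ ^ 2 * (⟪v, y⟫ * ⟪w, y⟫) ∂μ
      = μ.real univ / (finrank ℝ E * (finrank ℝ E + 2))
        * (‖u‖ ^ 2 * ⟪v, w⟫ + 2 * (⟪u, v⟫ * ⟪u, w⟫)) := by
  calc ∫ y, ⟪u, y⟫ ^ 2 * (⟪v, y⟫ * ⟪w, y⟫) ∂μ
      = ∫ y, 1 / 4 * (⟪u, y⟫ ^ 2 * ⟪v + w, y⟫ ^ 2 - ⟪u, y⟫ ^ 2 * ⟪v - w, y⟫ ^ 2) ∂μ := by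
        congr with y
        rw [inner_add_left, inner_sub_left]
        ring
    _ = 1 / 4 * (∫ y, ⟪u, y⟫ ^ 2 * ⟪v + w, y⟫ ^ 2 ∂μ
          - ∫ y, ⟪u, y⟫ ^ 2 * ⟪v - w, y⟫ ^ 2 ∂μ) := by
        rw [integral_const_mul, integral_sub] <;> exact integrable_of_continuous (by fun_prop)
    _ = _ := by
        simp only [integral_inner_sq_mul_inner_sq hμ, norm_add_sq_real, norm_sub_sq_real,
          inner_add_right, inner_sub_right]
        ring

lemma integral_inner_mul_inner_mul_inner_mul_inner [Nontrivial E] (hμ : IsRotationInvariant μ)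
    (u v w x : E) :
    ∫ y, ⟪u, y⟫ * ⟪v, y⟫ * (⟪w, y⟫ * ⟪x, y⟫) ∂μ
      = μ.real univ / (finrank ℝ E * (finrank ℝ E + 2))
        * (⟪u, v⟫ * ⟪w, x⟫ + ⟪u, w⟫ * ⟪v, x⟫ + ⟪u, x⟫ * ⟪v, w⟫) := by
  calc ∫ y, ⟪u, y⟫ * ⟪v, y⟫ * (⟪w, y⟫ * ⟪x, y⟫) ∂μ
      = ∫ y, 1 / 4 * (⟪u + v, y⟫ ^ 2 * (⟪w, y⟫ * ⟪x, y⟫)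
          - ⟪u - v, y⟫ ^ 2 * (⟪w, y⟫ * ⟪x, y⟫)) ∂μ := by
        congr with y
        rw [inner_add_left, inner_sub_left]
        ring
    _ = 1 / 4 * (∫ y, ⟪u + v, y⟫ ^ 2 * (⟪w, y⟫ * ⟪x, y⟫) ∂μ
          - ∫ y, ⟪u - v, y⟫ ^ 2 * (⟪w, y⟫ * ⟪x, y⟫) ∂μ) := by
        rw [integral_const_mul, integral_sub] <;> exact integrable_of_continuous (by fun_prop)
    _ = _ := by
        rw [integral_inner_sq_mul_inner_mul_inner hμ, integral_inner_sq_mul_inner_mul_inner hμ,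
          norm_add_sq_real, norm_sub_sq_real]
        simp only [inner_add_left, inner_sub_left]
        ring

end Moments

section Coordinates

variable {ι : Type*} [Fintype ι] [DecidableEq ι] {μ : Measure (sphere (0 : EuclideanSpace ℝ ι) 1)}
  [IsFiniteMeasure μ]

lemma integral_coord_mul_coord (hμ : IsRotationInvariant μ) (i j : ι) :
    ∫ y, y.1 i * y.1 j ∂μ = μ.real univ / Fintype.card ι * (if i = j then 1 else 0) := by
  have : Nonempty ι := ⟨i⟩
  simpa [EuclideanSpace.inner_single_left, Pi.single_apply] using
    integral_inner_mul_inner hμ (EuclideanSpace.single i (1 : ℝ)) (EuclideanSpace.single j 1)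

lemma integral_quadratic_mul_coord_mul_coord (hμ : IsRotationInvariant μ) (A : ι → ι → ℝ)
    (k p : ι) :
    ∫ y, (∑ i, ∑ j, A i j * y.1 i * y.1 j) * (y.1 k * y.1 p) ∂μ
      = μ.real univ / (Fintype.card ι * (Fintype.card ι + 2))
        * ((∑ i, A i i) * (if k = p then 1 else 0) + A k p + A p k) := by
  have : Nonempty ι := ⟨k⟩
  let c := μ.real univ / (Fintype.card ι * (Fintype.card ι + 2))
  let δ (i j : ι) : ℝ := if i = j then 1 else 0
  have hmoment (i j : ι) : ∫ y, y.1 i * y.1 j * (y.1 k * y.1 p) ∂μ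
      = c * (δ i j * δ k p + δ i k * δ j p + δ i p * δ j k) := by
    simpa [EuclideanSpace.inner_single_left, Pi.single_apply, δ, c] using
      integral_inner_mul_inner_mul_inner_mul_inner hμ (EuclideanSpace.single i (1 : ℝ))
        (EuclideanSpace.single j 1) (EuclideanSpace.single k 1) (EuclideanSpace.single p 1)
  calc ∫ y, (∑ i, ∑ j, A i j * y.1 i * y.1 j) * (y.1 k * y.1 p) ∂μ
      = ∫ y, ∑ i, ∑ j, A i j * (y.1 i * y.1 j * (y.1 k * y.1 p)) ∂μ := by
        simp only [Finset.sum_mul, mul_assoc]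
    _ = ∑ i, ∑ j, A i j * ∫ y, y.1 i * y.1 j * (y.1 k * y.1 p) ∂μ := by
        rw [integral_finsetSum _ fun i _ => integrable_of_continuous (by fun_prop)]
        refine Finset.sum_congr rfl fun i _ => ?_
        rw [integral_finsetSum _ fun j _ => integrable_of_continuous (by fun_prop)]
        simp only [integral_const_mul]
    _ = c * ∑ i, ∑ j, (A i j * δ i j * δ k p + A i j * δ i k * δ j p + A i j * δ i p * δ j k) := by
        simp only [hmoment, Finset.mul_sum]
        refine Finset.sum_congr rfl fun i _ => Finset.sum_congr rfl fun j _ => ?_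
        ring
    _ = c * ((∑ i, A i i) * δ k p + A k p + A p k) := by
        simp [δ, Finset.sum_add_distrib]

end Coordinates

section Derivatives

variable {N : ℕ}

lemma hasFDerivAt_coord (i : Fin N) (y : EuclideanSpace ℝ (Fin N)) :
    HasFDerivAt (fun y : EuclideanSpace ℝ (Fin N) => y i)
      (EuclideanSpace.proj i : EuclideanSpace ℝ (Fin N) →L[ℝ] ℝ) y :=
  (EuclideanSpace.proj i : EuclideanSpace ℝ (Fin N) →L[ℝ] ℝ).hasFDerivAt

lemma pd_sum_mul_coord (c : Fin N → ℝ) (q : Fin N) :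
    pd N q (fun y => ∑ k, c k * y k) = fun _ => c q := by
  ext y
  have h := HasFDerivAt.fun_sum (u := Finset.univ) fun k _ =>
    (hasFDerivAt_coord k y).const_mul (c k)
  simp [pd, h.fderiv]

lemma pd_Hmat (W : Fin N → Fin N → Fin N → Fin N → ℝ) (i j q : Fin N) :
    pd N q (Hmat N W i j) = fun y => ∑ k, (W i k j q + W i q j k) * y k := by
  ext y
  have h : HasFDerivAt (Hmat N W i j) _ y :=
    HasFDerivAt.fun_sum (u := Finset.univ) fun k _ =>
      HasFDerivAt.fun_sum (u := Finset.univ) fun l _ =>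
        ((hasFDerivAt_coord k y).const_mul (W i k j l)).mul (hasFDerivAt_coord l y)
  simp [pd, h.fderiv, Finset.sum_add_distrib, add_mul, mul_comm]

lemma pd_pd_Hmat (W : Fin N → Fin N → Fin N → Fin N → ℝ) (i j k l : Fin N) :
    pd N k (pd N l (Hmat N W i j)) = fun _ => W i k j l + W i l j k := by
  rw [pd_Hmat, pd_sum_mul_coord]

end Derivatives

section SphereMeasure

variable {N : ℕ}

instance : IsFiniteMeasure (sphereMeasure N) :=
  inferInstanceAs (IsFiniteMeasure (volume : Measure (EuclideanSpace ℝ (Fin N))).toSphere)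

lemma isRotationInvariant_sphereMeasure : IsRotationInvariant (sphereMeasure N) :=
  isRotationInvariant_toSphere_volume

lemma measureReal_sphereMeasure_univ : (sphereMeasure N).real univ = sphereArea N :=
  rfl

lemma continuous_Hmat (W : Fin N → Fin N → Fin N → Fin N → ℝ) (i j : Fin N) :
    Continuous (Hmat N W i j) := by
  unfold Hmat
  fun_prop

lemma continuous_pd_Hmat (W : Fin N → Fin N → Fin N → Fin N → ℝ) (i j q : Fin N) :
    Continuous (pd N q (Hmat N W i j)) := by
  rw [pd_Hmat]
  fun_prop

lemma integral_Hmat_mul_pd_Hmat_mul_coord (W : Fin N → Fin N → Fin N → Fin N → ℝ)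
    (i j p q : Fin N) :
    ∫ y, Hmat N W i j y.1 * pd N q (Hmat N W i j) y.1 * y.1 p ∂(sphereMeasure N)
      = sphereArea N / (N * (N + 2))
        * ((∑ k, W i k j k) * (W i p j q + W i q j p)
          + ∑ k, (W i k j p + W i p j k) * (W i k j q + W i q j k)) := by
  have hHmat (k : Fin N) : ∫ y, Hmat N W i j y.1 * (y.1 k * y.1 p) ∂(sphereMeasure N)
      = sphereArea N / (N * (N + 2))
        * ((∑ l, W i l j l) * (if k = p then 1 else 0) + W i k j p + W i p j k) := by
    simpa [Hmat, measureReal_sphereMeasure_univ] using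
      integral_quadratic_mul_coord_mul_coord isRotationInvariant_sphereMeasure
        (fun k l => W i k j l) k p
  calc ∫ y, Hmat N W i j y.1 * pd N q (Hmat N W i j) y.1 * y.1 p ∂(sphereMeasure N)
      = ∫ y, ∑ k, (W i k j q + W i q j k) * (Hmat N W i j y.1 * (y.1 k * y.1 p))
          ∂(sphereMeasure N) := by
        congr with y
        rw [pd_Hmat, Finset.mul_sum, Finset.sum_mul]
        refine Finset.sum_congr rfl fun k _ => ?_
        ring
    _ = ∑ k, (W i k j q + W i q j k)
          * ∫ y, Hmat N W i j y.1 * (y.1 k * y.1 p) ∂(sphereMeasure N) := by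
        have := continuous_Hmat W i j
        rw [integral_finsetSum _ fun k _ => integrable_of_continuous (by fun_prop)]
        simp only [integral_const_mul]
    _ = sphereArea N / (N * (N + 2)) * ∑ k,
          ((∑ l, W i l j l) * (W i k j q + W i q j k) * (if k = p then 1 else 0)
            + (W i k j p + W i p j k) * (W i k j q + W i q j k)) := by
        simp only [hHmat, Finset.mul_sum _ _ (sphereArea N / _)]
        refine Finset.sum_congr rfl fun k _ => ?_
        ring
    _ = _ := by simp [Finset.sum_add_distrib]

lemma integral_sum_sq_pd_pd_Hmat_mul_coord_mul_coord (W : Fin N → Fin N → Fin N → Fin N → ℝ)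
    (p q : Fin N) :
    ∫ y, (∑ i, ∑ j, ∑ k, ∑ l, (pd N k (pd N l (Hmat N W i j)) y.1) ^ 2) * y.1 p * y.1 q
        ∂(sphereMeasure N)
      = sphereArea N / N * (∑ i, ∑ j, ∑ k, ∑ l, (W i k j l + W i l j k) ^ 2)
        * (if p = q then 1 else 0) := by
  have hcoord : ∫ y, y.1 p * y.1 q ∂(sphereMeasure N)
      = sphereArea N / N * (if p = q then 1 else 0) := by
    simpa [measureReal_sphereMeasure_univ] using
      integral_coord_mul_coord isRotationInvariant_sphereMeasure p q
  simp only [pd_pd_Hmat, mul_assoc, integral_const_mul, hcoord]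
  ring

end SphereMeasure

theorem stmt_7_general (N : ℕ) (W : Fin N → Fin N → Fin N → Fin N → ℝ)
    (hTrace : ∀ i j, ∑ k, W i k j k = 0) (p q : Fin N) :
    (∫ y, (∑ i, ∑ j, Hmat N W i j y.1 * pd N q (Hmat N W i j) y.1) * y.1 p ∂(sphereMeasure N)
      = sphereArea N / (N * (N + 2))
        * ∑ i, ∑ j, ∑ k, (W i k j p + W i p j k) * (W i k j q + W i q j k)) ∧
    (∫ y, (∑ i, ∑ j, ∑ k, ∑ l, (pd N k (pd N l (Hmat N W i j)) y.1) ^ 2) * y.1 p * y.1 q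
        ∂(sphereMeasure N)
      = sphereArea N / N * (∑ i, ∑ j, ∑ k, ∑ l, (W i k j l + W i l j k) ^ 2)
        * (if p = q then 1 else 0)) := by
  refine ⟨?_, integral_sum_sq_pd_pd_Hmat_mul_coord_mul_coord W p q⟩
  have hH := continuous_Hmat W
  have hdH := continuous_pd_Hmat W
  simp only [Finset.sum_mul, Finset.mul_sum _ _ (sphereArea N / _)]
  rw [integral_finsetSum _ fun i _ => integrable_of_continuous (by fun_prop)]
  refine Finset.sum_congr rfl fun i _ => ?_
  rw [integral_finsetSum _ fun j _ => integrable_of_continuous (by fun_prop)]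
  refine Finset.sum_congr rfl fun j _ => ?_
  rw [integral_Hmat_mul_pd_Hmat_mul_coord, hTrace, zero_mul, zero_add, Finset.mul_sum]

theorem stmt_7 (N : ℕ) (hN : 5 ≤ N)
    (W : Fin N → Fin N → Fin N → Fin N → ℝ)
    (hW1 : ∀ i p j q, W i p j q = - W p i j q)
    (hW2 : ∀ i p j q, W i p j q = - W i p q j)
    (hW3 : ∀ i p j q, W i p j q = W j q i p)
    (hBianchi : ∀ i p j q, W i p j q + W i j q p + W i q p j = 0)
    (hTrace : ∀ p q, ∑ i : Fin N, W i p i q = 0) :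
    ∀ p q : Fin N,
    (∫ y : Metric.sphere (0 : EuclideanSpace ℝ (Fin N)) 1,
        (∑ i : Fin N, ∑ j : Fin N, Hmat N W i j ↑y * pd N q (Hmat N W i j) ↑y)
          * ((y : EuclideanSpace ℝ (Fin N)) p) ∂(sphereMeasure N)
      = sphereArea N / (N * (N + 2))
          * ∑ i : Fin N, ∑ j : Fin N, ∑ k : Fin N,
              (W i k j p + W i p j k) * (W i k j q + W i q j k)) ∧
    (∫ y : Metric.sphere (0 : EuclideanSpace ℝ (Fin N)) 1,
        (∑ i : Fin N, ∑ j : Fin N, ∑ k : Fin N, ∑ l : Fin N,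
          (pd N k (pd N l (Hmat N W i j)) ↑y) ^ 2)
          * ((y : EuclideanSpace ℝ (Fin N)) p) * ((y : EuclideanSpace ℝ (Fin N)) q)
          ∂(sphereMeasure N)
      = sphereArea N / N
          * (∑ i : Fin N, ∑ j : Fin N, ∑ k : Fin N, ∑ l : Fin N,
              (W i k j l + W i l j k) ^ 2)
          * (if p = q then (1 : ℝ) else 0)) :=
  stmt_7_general N W fun i j => by
    rw [← hTrace i j]
    exact Finset.sum_congr rfl fun k _ => by rw [hW1, hW2, neg_neg]
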